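/- Let δ ≥ 1 and let 𝒜 be a finite family of δ-element subsets of a finite set with |𝒜| = ξ_δ + 1, where ξ_δ := Σ_{j=1}^{δ} C(2j-1, j). If |∂𝒜| ≥ |𝒜|, then 𝒜 is uniformly collapsible. -/

import Mathlib

/-- A family `𝒜` of `k`-element finite sets is uniformly collapsible if there is an
injective map `f` on `𝒜` with `f F` a `(k-1)`-element subset of `F` for each `F ∈ 𝒜`. -/
def UniformlyCollapsible {α : Type*} [DecidableEq α] (k : ℕ) (𝒜 : Finset (Finset α)) : Prop :=
  ∃ f : Finset α → Finset α, Set.InjOn f ↑𝒜 ∧ ∀ F ∈ 𝒜, f F ⊆ F ∧ (f F).card = k - 1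

/-!
By Hall's theorem, `𝒜` is uniformly collapsible as soon as `|ℬ| ≤ |∂ℬ|` for every `ℬ ⊆ 𝒜`. For
`ℬ = 𝒜` this is assumed, and a proper subfamily has at most `ξ_k` members, so it suffices that a
`k`-uniform family with at most `ξ_k` members is no larger than its shadow. This is proved by
induction on `k`. By Kruskal–Katona, the `(k+1)`-uniform family may be taken to be an initial
segment `𝒞` of the colexicographic order. As `ξ_{k+1} ≤ C(2k+2, k+1)`, its members lie in
`S ∪ {v}`, where `S` consists of the first `2k+1` points and `v` is the next one.
* The members avoiding `v` are `(k+1)`-subsets of the `(2k+1)`-set `S`, so the local LYM inequality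
  bounds their number by the size of their shadow.
* If `𝒞` has a member containing `v`, it contains all `C(2k+1, k+1)` of the `(k+1)`-subsets of `S`,
  so the link of `v` has at most `ξ_{k+1} - C(2k+1, k+1) = ξ_k` members, and the induction
  hypothesis applies to it.

The two shadows contribute to disjoint parts of `∂𝒞`: the sets avoiding `v` and those containing it.
If there is no next point `v`, the local LYM inequality applies to all of `𝒞`.
-/

section

open Finset Finset.Colex
open scoped FinsetFamily

/-- The number `ξ_k = ∑_{j=1}^k C(2j-1, j)`. -/
def xi (k : ℕ) : ℕ := ∑ j ∈ Icc 1 k, (2 * j - 1).choose j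

lemma xi_zero : xi 0 = 0 := rfl

lemma xi_succ (k : ℕ) : xi (k + 1) = xi k + (2 * k + 1).choose (k + 1) :=
  sum_Icc_succ_top (by omega) _

lemma xi_le_choose (k : ℕ) : xi k ≤ (2 * k).choose k := by
  induction k with
  | zero => simp [xi_zero]
  | succ k ih =>
    calc xi (k + 1) = xi k + (2 * k + 1).choose (k + 1) := xi_succ k
      _ ≤ (2 * k + 1).choose k + (2 * k + 1).choose (k + 1) := by
        gcongr
        exact ih.trans (Nat.choose_le_choose k (by omega))
      _ = (2 * (k + 1)).choose (k + 1) := (Nat.choose_succ_succ' (2 * k + 1) k).symm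

section Transport

variable {α β : Type*} {𝒜 : Finset (Finset α)} {r : ℕ}

lemma sized_map_mapEmbedding (f : α ↪ β) :
    (𝒜.map (mapEmbedding f).toEmbedding : Set (Finset β)).Sized r ↔
      (𝒜 : Set (Finset α)).Sized r := by
  simp [Set.Sized]

lemma shadow_map_mapEmbedding [DecidableEq α] [DecidableEq β] (f : α ↪ β) :
    ∂ (𝒜.map (mapEmbedding f).toEmbedding) = (∂ 𝒜).map (mapEmbedding f).toEmbedding := by
  ext t
  simp only [mem_shadow_iff, mem_map, RelEmbedding.coe_toEmbedding, mapEmbedding_apply,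
    exists_exists_and_eq_and, ← map_erase]
  constructor
  · rintro ⟨s, hs, a, ha, rfl⟩
    exact ⟨s.erase a, ⟨s, hs, a, ha, rfl⟩, rfl⟩
  · rintro ⟨_, ⟨s, hs, a, ha, rfl⟩, rfl⟩
    exact ⟨s, hs, a, ha, rfl⟩

lemma exists_map_mapEmbedding_eq {S : Finset α} (h𝒜 : 𝒜 ⊆ S.powerset) :
    ∃ (f : Fin #S ↪ α) (ℬ : Finset (Finset (Fin #S))),
      ℬ.map (mapEmbedding f).toEmbedding = 𝒜 := by
  let f : Fin #S ↪ α := S.equivFin.symm.toEmbedding.trans (Function.Embedding.subtype _)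
  have hf : univ.map f = S := by
    rw [← map_map, univ_map_equiv_to_embedding, univ_eq_attach, attach_map_val]
  have hsub : 𝒜 ⊆ univ.map (mapEmbedding f).toEmbedding := fun s hs => by
    obtain ⟨t, -, rfl⟩ := subset_map_iff.1 (hf ▸ mem_powerset.1 (h𝒜 hs))
    exact mem_map_of_mem _ (mem_univ t)
  obtain ⟨ℬ, -, rfl⟩ := subset_map_iff.1 hsub
  exact ⟨f, ℬ, rfl⟩

end Transport

section Shadow

variable {α : Type*} [DecidableEq α] {𝒜 : Finset (Finset α)} {S : Finset α} {a : α} {r : ℕ}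

lemma card_mul_le_card_shadow_mul_of_subset_powersetCard (h𝒜 : 𝒜 ⊆ powersetCard r S) :
    #𝒜 * r ≤ #(∂ 𝒜) * (#S - r + 1) := by
  obtain ⟨f, ℬ, rfl⟩ :=
    exists_map_mapEmbedding_eq fun s hs => mem_powerset.2 (mem_powersetCard.1 (h𝒜 hs)).1
  have hℬ : (ℬ : Set (Finset (Fin #S))).Sized r :=
    (sized_map_mapEmbedding f).1 fun s hs => (mem_powersetCard.1 (h𝒜 hs)).2
  simpa only [shadow_map_mapEmbedding, card_map, Fintype.card_fin] using
    card_mul_le_card_shadow_mul hℬ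

lemma card_le_card_shadow_of_subset_powersetCard (h𝒜 : 𝒜 ⊆ powersetCard r S) (hS : #S < 2 * r) :
    #𝒜 ≤ #(∂ 𝒜) := by
  refine Nat.le_of_mul_le_mul_right (c := r) ?_ (by omega)
  calc #𝒜 * r ≤ #(∂ 𝒜) * (#S - r + 1) := card_mul_le_card_shadow_mul_of_subset_powersetCard h𝒜
    _ ≤ #(∂ 𝒜) * r := by gcongr; omega

lemma sized_memberSubfamily (h𝒜 : (𝒜 : Set (Finset α)).Sized (r + 1)) :
    (𝒜.memberSubfamily a : Set (Finset α)).Sized r := by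
  intro s hs
  obtain ⟨hs, has⟩ := mem_memberSubfamily.1 hs
  simpa [has] using h𝒜 hs

lemma nonMemberSubfamily_subset_powersetCard (h𝒜 : 𝒜 ⊆ powersetCard r (insert a S)) :
    𝒜.nonMemberSubfamily a ⊆ powersetCard r S := by
  intro s hs
  obtain ⟨hs, has⟩ := mem_nonMemberSubfamily.1 hs
  obtain ⟨hsS, hsr⟩ := mem_powersetCard.1 (h𝒜 hs)
  exact mem_powersetCard.2 ⟨(subset_insert_iff_of_notMem has).1 hsS, hsr⟩

lemma shadow_memberSubfamily_subset (𝒜 : Finset (Finset α)) (a : α) :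
    ∂ (𝒜.memberSubfamily a) ⊆ (∂ 𝒜).memberSubfamily a := by
  intro t ht
  simp only [mem_shadow_iff_insert_mem, mem_memberSubfamily, mem_insert, not_or] at ht ⊢
  obtain ⟨b, hbt, hb, hab, hat⟩ := ht
  exact ⟨⟨b, ⟨Ne.symm hab, hbt⟩, insert_comm a b t ▸ hb⟩, hat⟩

lemma shadow_nonMemberSubfamily_subset (𝒜 : Finset (Finset α)) (a : α) :
    ∂ (𝒜.nonMemberSubfamily a) ⊆ (∂ 𝒜).nonMemberSubfamily a := by
  intro t ht
  simp only [mem_shadow_iff_insert_mem, mem_nonMemberSubfamily, mem_insert, not_or] at ht ⊢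
  obtain ⟨b, hbt, hb, -, hat⟩ := ht
  exact ⟨⟨b, hbt, hb⟩, hat⟩

lemma card_shadow_memberSubfamily_add_card_shadow_nonMemberSubfamily_le
    (𝒜 : Finset (Finset α)) (a : α) :
    #(∂ (𝒜.memberSubfamily a)) + #(∂ (𝒜.nonMemberSubfamily a)) ≤ #(∂ 𝒜) := by
  rw [← card_memberSubfamily_add_card_nonMemberSubfamily a (∂ 𝒜)]
  gcongr
  · exact shadow_memberSubfamily_subset 𝒜 a
  · exact shadow_nonMemberSubfamily_subset 𝒜 a

end Shadow

section InitSeg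

lemma exists_subset_card_eq_forall_lt_mem {ι β : Type*} [LinearOrder β] (f : ι → β)
    {s : Finset ι} {m : ℕ} (hm : m ≤ #s) :
    ∃ t ⊆ s, #t = m ∧ ∀ i ∈ t, ∀ j ∈ s, f j < f i → j ∈ t := by
  classical
  induction s using induction_on_max_value f with
  | empty => exact ⟨∅, Subset.rfl, (Nat.le_zero.1 hm).symm, by simp⟩
  | insert a s ha hmax ih =>
    obtain hm | rfl := Nat.le_or_eq_of_le_succ (hm.trans_eq (card_insert_of_notMem ha))
    · obtain ⟨t, hts, hcard, hlower⟩ := ih hm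
      refine ⟨t, hts.trans (subset_insert a s), hcard, fun i hi j hj hji => ?_⟩
      obtain rfl | hj := mem_insert.1 hj
      · exact absurd hji (hmax i (hts hi)).not_gt
      · exact hlower i hi j hj hji
    · exact ⟨insert a s, Subset.rfl, card_insert_of_notMem ha, fun _ _ _ hj _ => hj⟩

variable {α : Type*} [LinearOrder α] {𝒜 ℬ 𝒞 : Finset (Finset α)} {S : Finset α} {a : α} {r : ℕ}

lemma exists_isInitSeg_card_eq [Finite α] (h𝒜 : (𝒜 : Set (Finset α)).Sized r) :
    ∃ 𝒞 : Finset (Finset α), IsInitSeg 𝒞 r ∧ #𝒞 = #𝒜 := by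
  cases nonempty_fintype α
  obtain ⟨𝒞, hsub, hcard, hlower⟩ := exists_subset_card_eq_forall_lt_mem toColex
    (card_le_card (subset_powersetCard_univ_iff.2 h𝒜))
  refine ⟨𝒞, ⟨subset_powersetCard_univ_iff.1 hsub, fun s t hs ht => ?_⟩, hcard⟩
  exact hlower s hs t (mem_powersetCard_univ.2 ht.2) ht.1

lemma isInitSeg_powersetCard (hS : IsLowerSet (S : Set α)) (r : ℕ) :
    IsInitSeg (powersetCard r S) r := by
  refine ⟨Set.sized_powersetCard S r, ?_⟩
  rintro s t hs ⟨hts, ht⟩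
  obtain ⟨hsS, -⟩ := mem_powersetCard.1 hs
  refine mem_powersetCard.2 ⟨fun x hx => ?_, ht⟩
  by_cases hxs : x ∈ s
  · exact hsS hxs
  · obtain ⟨y, hy, -, hxy⟩ := toColex_le_toColex.1 hts.le hx hxs
    exact hS hxy (hsS hy)

lemma subset_of_isInitSeg_of_card_le (h𝒜 : IsInitSeg 𝒜 r) (hℬ : IsInitSeg ℬ r) (h : #𝒜 ≤ #ℬ) :
    𝒜 ⊆ ℬ :=
  (h𝒜.total hℬ).elim id fun hℬ𝒜 => (eq_of_subset_of_card_le hℬ𝒜 h).ge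

lemma card_memberSubfamily_le_card_sub_choose (h𝒞 : IsInitSeg 𝒞 r)
    (hS : IsLowerSet (S : Set α)) (ha : a ∉ S) :
    #(𝒞.memberSubfamily a) ≤ #𝒞 - (#S).choose r := by
  obtain h𝒞S | hS𝒞 := h𝒞.total (isInitSeg_powersetCard hS r)
  · have hempty : 𝒞.memberSubfamily a = ∅ := by
      refine eq_empty_of_forall_notMem fun s hs => ha ?_
      exact (mem_powersetCard.1 (h𝒞S (mem_memberSubfamily.1 hs).1)).1 (mem_insert_self a s)
    simp [hempty]
  · have hle : #(powersetCard r S) ≤ #(𝒞.nonMemberSubfamily a) :=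
      card_le_card fun s hs => mem_nonMemberSubfamily.2
        ⟨hS𝒞 hs, fun has => ha ((mem_powersetCard.1 hs).1 has)⟩
    have hsplit := card_memberSubfamily_add_card_nonMemberSubfamily a 𝒞
    rw [card_powersetCard] at hle
    omega

end InitSeg

section SmallFamilies

lemma card_le_card_shadow_of_isInitSeg {n k : ℕ} {𝒞 : Finset (Finset (Fin n))}
    (h𝒞 : IsInitSeg 𝒞 (k + 1)) (hcard : #𝒞 ≤ xi (k + 1))
    (ih : ∀ ℬ : Finset (Finset (Fin n)),
      (ℬ : Set (Finset (Fin n))).Sized k → #ℬ ≤ xi k → #ℬ ≤ #(∂ ℬ)) :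
    #𝒞 ≤ #(∂ 𝒞) := by
  obtain hn | hn := Nat.lt_or_ge n (2 * (k + 1))
  · exact card_le_card_shadow_of_subset_powersetCard (subset_powersetCard_univ_iff.2 h𝒞.1)
      (by rwa [card_univ, Fintype.card_fin])
  let v : Fin n := ⟨2 * k + 1, by omega⟩
  have hcard_Iio : #(Iio v) = 2 * k + 1 := Fin.card_Iio v
  have h𝒞v : 𝒞 ⊆ powersetCard (k + 1) (Iic v) := by
    refine subset_of_isInitSeg_of_card_le h𝒞
      (isInitSeg_powersetCard (by simpa using isLowerSet_Iic v) _) ?_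
    rw [card_powersetCard, Fin.card_Iic]
    exact hcard.trans (xi_le_choose (k + 1))
  have hlink : #(𝒞.memberSubfamily v) ≤ #(∂ (𝒞.memberSubfamily v)) := by
    refine ih _ (sized_memberSubfamily h𝒞.1) ?_
    calc #(𝒞.memberSubfamily v) ≤ #𝒞 - (#(Iio v)).choose (k + 1) :=
          card_memberSubfamily_le_card_sub_choose h𝒞 (by simpa using isLowerSet_Iio v) (by simp)
      _ ≤ xi k := by rw [hcard_Iio]; have := xi_succ k; omega
  have hdel : #(𝒞.nonMemberSubfamily v) ≤ #(∂ (𝒞.nonMemberSubfamily v)) := by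
    rw [← Iio_insert] at h𝒞v
    exact card_le_card_shadow_of_subset_powersetCard
      (nonMemberSubfamily_subset_powersetCard h𝒞v) (by omega)
  calc #𝒞 = #(𝒞.memberSubfamily v) + #(𝒞.nonMemberSubfamily v) :=
        (card_memberSubfamily_add_card_nonMemberSubfamily v 𝒞).symm
    _ ≤ #(∂ (𝒞.memberSubfamily v)) + #(∂ (𝒞.nonMemberSubfamily v)) := by gcongr
    _ ≤ #(∂ 𝒞) := card_shadow_memberSubfamily_add_card_shadow_nonMemberSubfamily_le 𝒞 v

lemma card_le_card_shadow_of_card_le_xi_fin {n k : ℕ} {𝒜 : Finset (Finset (Fin n))}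
    (h𝒜 : (𝒜 : Set (Finset (Fin n))).Sized k) (hcard : #𝒜 ≤ xi k) : #𝒜 ≤ #(∂ 𝒜) := by
  induction k generalizing 𝒜 with
  | zero => exact (hcard.trans_eq xi_zero).trans (Nat.zero_le _)
  | succ k ih =>
    obtain ⟨𝒞, h𝒞, h𝒞𝒜⟩ := exists_isInitSeg_card_eq h𝒜
    calc #𝒜 = #𝒞 := h𝒞𝒜.symm
      _ ≤ #(∂ 𝒞) := card_le_card_shadow_of_isInitSeg h𝒞 (h𝒞𝒜.trans_le hcard) fun _ => ih
      _ ≤ #(∂ 𝒜) := kruskal_katona h𝒜 h𝒞𝒜.le h𝒞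

variable {α : Type*} [DecidableEq α] {𝒜 : Finset (Finset α)} {k : ℕ}

theorem card_le_card_shadow_of_card_le_xi (h𝒜 : (𝒜 : Set (Finset α)).Sized k)
    (hcard : #𝒜 ≤ xi k) : #𝒜 ≤ #(∂ 𝒜) := by
  obtain ⟨S, hS⟩ : ∃ S : Finset α, 𝒜 ⊆ S.powerset :=
    ⟨𝒜.sup id, fun _ hs => mem_powerset.2 (le_sup (f := id) hs)⟩
  obtain ⟨f, ℬ, rfl⟩ := exists_map_mapEmbedding_eq hS
  rw [shadow_map_mapEmbedding, card_map, card_map]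
  rw [card_map] at hcard
  exact card_le_card_shadow_of_card_le_xi_fin ((sized_map_mapEmbedding f).1 h𝒜) hcard

end SmallFamilies

section Hall

lemma exists_injOn_of_forall_card_le_card_biUnion {ι α : Type*} [DecidableEq α] [Nonempty α]
    {s : Finset ι} {t : ι → Finset α} (h : ∀ u ⊆ s, #u ≤ #(u.biUnion t)) :
    ∃ f : ι → α, Set.InjOn f s ∧ ∀ i ∈ s, f i ∈ t i := by
  classical
  obtain ⟨g, hg, hmem⟩ :=
    (all_card_le_biUnion_card_iff_exists_injective fun i : s => t i).1 fun u => by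
      have hu := h (u.map (Function.Embedding.subtype _)) (map_subtype_subset u)
      rwa [card_map, map_eq_image, image_biUnion] at hu
  let f : ι → α := Function.extend Subtype.val g fun _ => Classical.arbitrary α
  have hf (i : s) : f i = g i := Subtype.val_injective.extend_apply _ _ i
  refine ⟨f, fun i hi j hj hij => ?_, fun i hi => ?_⟩
  · exact congrArg Subtype.val (hg ((hf ⟨i, hi⟩).symm.trans (hij.trans (hf ⟨j, hj⟩))))
  · exact (hf ⟨i, hi⟩).symm ▸ hmem ⟨i, hi⟩

variable {α : Type*} [DecidableEq α] {𝒜 : Finset (Finset α)} {k : ℕ}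

lemma shadow_subset_biUnion_powersetCard (h𝒜 : (𝒜 : Set (Finset α)).Sized k) :
    ∂ 𝒜 ⊆ 𝒜.biUnion (powersetCard (k - 1)) := by
  intro t ht
  obtain ⟨s, hs, hts⟩ := exists_subset_of_mem_shadow ht
  exact mem_biUnion.2 ⟨s, hs, mem_powersetCard.2 ⟨hts, h𝒜.shadow ht⟩⟩

theorem uniformlyCollapsible_of_forall_card_le_card_shadow (h𝒜 : (𝒜 : Set (Finset α)).Sized k)
    (h : ∀ ℬ ⊆ 𝒜, #ℬ ≤ #(∂ ℬ)) : UniformlyCollapsible k 𝒜 := by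
  obtain ⟨f, hf, hmem⟩ := exists_injOn_of_forall_card_le_card_biUnion
    (t := powersetCard (k - 1)) fun ℬ hℬ => (h ℬ hℬ).trans
      (card_le_card (shadow_subset_biUnion_powersetCard (h𝒜.mono (coe_subset.2 hℬ))))
  exact ⟨f, hf, fun F hF => mem_powersetCard.1 (hmem F hF)⟩

end Hall

theorem stmt_6_general {α : Type*} [DecidableEq α] {k : ℕ} {𝒜 : Finset (Finset α)}
    (h𝒜 : (𝒜 : Set (Finset α)).Sized k) (hcard : #𝒜 ≤ xi k + 1) (hsh : #𝒜 ≤ #(∂ 𝒜)) :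
    UniformlyCollapsible k 𝒜 := by
  refine uniformlyCollapsible_of_forall_card_le_card_shadow h𝒜 fun ℬ hℬ => ?_
  obtain rfl | hne := eq_or_ne ℬ 𝒜
  · exact hsh
  · have hlt : #ℬ < #𝒜 := card_lt_card (hℬ.ssubset_of_ne hne)
    exact card_le_card_shadow_of_card_le_xi (h𝒜.mono (coe_subset.2 hℬ)) (by omega)

end

/-- If `𝒜` is a `δ`-uniform family with `|𝒜| = ξ_δ + 1` and `|∂𝒜| ≥ |𝒜|`, then `𝒜`
is uniformly collapsible. -/
theorem stmt_6 {α : Type*} [DecidableEq α] [Fintype α] (δ : ℕ) (hδ : 1 ≤ δ)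
    (𝒜 : Finset (Finset α)) (h𝒜 : ∀ s ∈ 𝒜, s.card = δ)
    (hcard : 𝒜.card = (∑ j ∈ Finset.Icc 1 δ, Nat.choose (2 * j - 1) j) + 1)
    (hsh : 𝒜.card ≤ 𝒜.shadow.card) :
    UniformlyCollapsible δ 𝒜 :=
  stmt_6_general h𝒜 hcard.le hsh
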